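/- Let α > 0, T > 0, and define A(t,x,y) = t^{−(α+2)/(2(α+1))} F(λ(t,x,y)) with λ(t,x,y) = x·t^{−1/(α+1)} + y²/(4 t^{(α+2)/(α+1)}). Let f : [0,T] → L¹(ℝ²) be continuous and suppose there is a continuous g : [0,T] → L¹(ℝ²) such that for each s ∈ [0,T], g(s) is the distributional derivative with respect to x of f(s). Then for each t ∈ (0,T] the function W(t,x,y) := ∫_{0}^{t} ∫_{ℝ²} A(t−s, x−x′, y−y′) f(s,x′,y′) dx′dy′ ds is well defined (the inner integral is bounded by a constant times (t−s)^{−(α+2)/(2(α+1))}‖f(s)‖_{L¹}, which is integrable in s since (α+2)/(2(α+1)) < 1), is continuously differentiable in x with ∂_x W(t,x,y) = ∫_{0}^{t} ∫_{ℝ²} A(t−s, x−x′, y−y′) g(s,x′,y′) dx′dy′ ds, and for every fixed y ∈ ℝ and t ∈ (0,T], W(t,x,y) → 0 as |x| → ∞. -/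

import Mathlib

open MeasureTheory Filter

/-- The partial integral defining `F(λ)`. -/
noncomputable def Fpartial (α l R : ℝ) : ℂ :=
  ∫ ξ in (-R)..R,
    (Real.sign ξ : ℂ) *
      Complex.exp (-Complex.I * (Real.sign ξ : ℂ) * ((Real.pi / 4 : ℝ) : ℂ)) *
      ((|ξ| ^ (-(2⁻¹) : ℝ) : ℝ) : ℂ) *
      Complex.exp (Complex.I * ((l * ξ + ξ * |ξ| ^ α : ℝ) : ℂ))

/-- The self-similar variable `λ(t,x,y) = x·t^{-1/(α+1)} + y²/(4t^{(α+2)/(α+1)})`. -/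
noncomputable def selfSim (α t x y : ℝ) : ℝ :=
  x * t ^ (-(1 / (α + 1)) : ℝ) + y ^ 2 / (4 * t ^ ((α + 2) / (α + 1) : ℝ))

/-- The kernel `A(t,x,y) = t^{-(α+2)/(2(α+1))} F(λ(t,x,y))`. -/
noncomputable def Akernel (F : ℝ → ℂ) (α t x y : ℝ) : ℂ :=
  ((t ^ (-((α + 2) / (2 * (α + 1))) : ℝ) : ℝ) : ℂ) * F (selfSim α t x y)



noncomputable def gI (α l ξ : ℝ) : ℂ :=
  ((ξ ^ (-(2⁻¹) : ℝ) : ℝ) : ℂ) * Complex.exp (Complex.I * ((l * ξ + ξ * ξ ^ α : ℝ) : ℂ))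

lemma norm_exp_I_mul' (r : ℝ) : ‖Complex.exp (Complex.I * (r : ℂ))‖ = 1 := by
  rw [mul_comm]; exact Complex.norm_exp_ofReal_mul_I r

lemma norm_gI (α l ξ : ℝ) (h : 0 ≤ ξ) : ‖gI α l ξ‖ = ξ ^ (-(2⁻¹) : ℝ) := by
  rw [gI, norm_mul, norm_exp_I_mul', mul_one, Complex.norm_real, Real.norm_of_nonneg]
  positivity

lemma gI_meas (α l : ℝ) : Measurable (gI α l) := by
  unfold gI; fun_prop

lemma gI_ii (α l a b : ℝ) (ha : 0 ≤ a) (hb : 0 ≤ b) :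
    IntervalIntegrable (gI α l) volume a b := by
  have h : IntervalIntegrable (fun x : ℝ => x ^ (-(2⁻¹) : ℝ)) volume a b :=
    intervalIntegral.intervalIntegrable_rpow' (by norm_num)
  refine h.mono_fun (gI_meas α l).aestronglyMeasurable ?_
  refine (ae_restrict_mem measurableSet_uIoc).mono fun x hx => ?_
  have hx0 : 0 ≤ x := by
    rcases Set.mem_uIoc.1 hx with h | h <;> linarith [h.1]
  show ‖gI α l x‖ ≤ ‖x ^ (-(2⁻¹) : ℝ)‖
  rw [norm_gI _ _ _ hx0]
  exact le_abs_self _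

lemma vdc (α l a b m : ℝ) (hα : 0 < α) (ha : 0 < a) (hab : a ≤ b) (hm : 0 < m)
    (hD : ∀ ξ ∈ Set.Icc a b, m ≤ |l + (α + 1) * ξ ^ α|) :
    ‖∫ ξ in a..b, gI α l ξ‖ ≤ 5 * (a ^ (-(2⁻¹) : ℝ) / m) := by
  set D : ℝ → ℝ := fun ξ => l + (α + 1) * ξ ^ α with hDdef
  set w : ℝ → ℝ := fun ξ => ξ ^ (-(2⁻¹) : ℝ) with hwdef
  set w' : ℝ → ℝ := fun ξ => (-(2⁻¹)) * ξ ^ (-(2⁻¹) - 1 : ℝ) with hw'def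
  set D' : ℝ → ℝ := fun ξ => (α + 1) * (α * ξ ^ (α - 1)) with hD'def
  set e : ℝ → ℂ := fun ξ => Complex.exp (Complex.I * ((l * ξ + ξ * ξ ^ α : ℝ) : ℂ)) with hedef
  have hpos : ∀ ξ ∈ Set.Icc a b, 0 < ξ := fun ξ h => ha.trans_le h.1
  have hD0 : ∀ ξ ∈ Set.Icc a b, D ξ ≠ 0 := fun ξ h => abs_pos.1 (hm.trans_le (hD ξ h))
  have hwd : ∀ ξ ∈ Set.Icc a b, HasDerivAt w (w' ξ) ξ := fun ξ h =>
    Real.hasDerivAt_rpow_const (Or.inl (hpos ξ h).ne')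
  have hDd : ∀ ξ ∈ Set.Icc a b, HasDerivAt D (D' ξ) ξ := fun ξ h =>
    ((Real.hasDerivAt_rpow_const (Or.inl (hpos ξ h).ne')).const_mul _).const_add _
  have hed : ∀ ξ ∈ Set.Icc a b, HasDerivAt e (e ξ * (Complex.I * (D ξ : ℂ))) ξ := by
    intro ξ h
    have h1 : HasDerivAt (fun ξ : ℝ => l * ξ + ξ * ξ ^ α) (D ξ) ξ := by
      have h2 := ((hasDerivAt_id ξ).const_mul l).add ((hasDerivAt_id ξ).mul
        (Real.hasDerivAt_rpow_const (p := α) (Or.inl (hpos ξ h).ne')))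
      refine HasDerivAt.congr_deriv h2 ?_
      have hh : ξ ^ (α - 1) * ξ = ξ ^ α := by
        rw [Real.rpow_sub_one (hpos ξ h).ne']; field_simp [(hpos ξ h).ne']
      change l * 1 + (1 * ξ ^ α + ξ * (α * ξ ^ (α - 1))) = l + (α + 1) * ξ ^ α
      linear_combination α * hh
    exact (h1.ofReal_comp.const_mul Complex.I).cexp
  have hwpos : ∀ ξ ∈ Set.Icc a b, 0 ≤ w ξ := fun ξ h => Real.rpow_nonneg (hpos ξ h).le _
  have hwle : ∀ ξ ∈ Set.Icc a b, w ξ ≤ w a := fun ξ h =>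
    Real.rpow_le_rpow_of_nonpos ha h.1 (by norm_num)
  have hD'pos : ∀ ξ ∈ Set.Icc a b, 0 ≤ D' ξ := fun ξ h => by
    have := Real.rpow_nonneg (hpos ξ h).le (α - 1)
    simp only [hD'def]; positivity
  have hw'neg : ∀ ξ ∈ Set.Icc a b, w' ξ ≤ 0 := fun ξ h => by
    have := Real.rpow_nonneg (hpos ξ h).le (-(2⁻¹) - 1)
    simp only [hw'def]; linarith
  have hDinv : ∀ ξ ∈ Set.Icc a b, |(D ξ)⁻¹| ≤ m⁻¹ := fun ξ h => by
    rw [abs_inv]; exact inv_anti₀ hm (hD ξ h)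
  -- H and the remainder
  set q' : ℝ → ℝ := fun ξ => w' ξ * (D ξ)⁻¹ + w ξ * (-D' ξ / D ξ ^ 2) with hq'def
  set H : ℝ → ℂ := fun ξ => -Complex.I * (((w ξ * (D ξ)⁻¹ : ℝ) : ℂ) * e ξ) with hHdef
  have hHd : ∀ ξ ∈ Set.Icc a b, HasDerivAt H (gI α l ξ + -Complex.I * ((q' ξ : ℂ) * e ξ)) ξ := by
    intro ξ h
    have h1 : HasDerivAt (fun ξ => w ξ * (D ξ)⁻¹) (q' ξ) ξ :=
      (hwd ξ h).mul ((hDd ξ h).inv (hD0 ξ h))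
    have h2 := (h1.ofReal_comp.mul (hed ξ h)).const_mul (-Complex.I)
    refine h2.congr_deriv ?_
    have h3 : (D ξ : ℂ) ≠ 0 := by exact_mod_cast hD0 ξ h
    have h4 : gI α l ξ = (w ξ : ℂ) * e ξ := rfl
    rw [h4]
    push_cast
    field_simp
    linear_combination (-(w ξ:ℂ)) * e ξ * Complex.I_sq
  set B : ℝ → ℝ := fun ξ => -(w ξ * m⁻¹) - w a * (D ξ)⁻¹ with hBdef
  have hBd : ∀ ξ ∈ Set.Icc a b, HasDerivAt B (-(w' ξ * m⁻¹) - w a * (-D' ξ / D ξ ^ 2)) ξ :=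
    fun ξ h => (((hwd ξ h).mul_const _).neg).sub (((hDd ξ h).inv (hD0 ξ h)).const_mul _)
  have hq'B : ∀ ξ ∈ Set.Icc a b, |q' ξ| ≤ -(w' ξ * m⁻¹) - w a * (-D' ξ / D ξ ^ 2) := by
    intro ξ h
    have h1 : |w' ξ * (D ξ)⁻¹| ≤ -(w' ξ * m⁻¹) := by
      have h0 : 0 ≤ -(w' ξ) := neg_nonneg.2 (hw'neg ξ h)
      have h00 := mul_le_mul_of_nonneg_left (hDinv ξ h) h0
      rw [abs_mul, abs_of_nonpos (hw'neg ξ h)]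
      linarith
    have hr : 0 ≤ D' ξ / D ξ ^ 2 := div_nonneg (hD'pos ξ h) (by positivity)
    have h2 : |w ξ * (-D' ξ / D ξ ^ 2)| ≤ w a * (D' ξ / D ξ ^ 2) := by
      rw [neg_div, mul_neg, abs_neg, abs_of_nonneg (mul_nonneg (hwpos ξ h) hr)]
      exact mul_le_mul_of_nonneg_right (hwle ξ h) hr
    calc |q' ξ| ≤ _ := abs_add_le _ _
      _ ≤ _ := add_le_add h1 h2
      _ = _ := by ring
  have hgc : ContinuousOn (gI α l) (Set.Icc a b) := by
    have : ∀ ξ ∈ Set.Icc a b, HasDerivAt (gI α l) _ ξ := fun ξ h =>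
      ((hwd ξ h).ofReal_comp).mul (hed ξ h)
    exact fun ξ h => (this ξ h).continuousAt.continuousWithinAt
  have hcw' : ContinuousOn w' (Set.Icc a b) := fun ξ h =>
    (ContinuousAt.mul continuousAt_const
      (Real.continuousAt_rpow_const _ _ (Or.inl (hpos ξ h).ne'))).continuousWithinAt
  have hcD' : ContinuousOn D' (Set.Icc a b) := fun ξ h =>
    (ContinuousAt.mul continuousAt_const (ContinuousAt.mul continuousAt_const
      (Real.continuousAt_rpow_const _ _ (Or.inl (hpos ξ h).ne')))).continuousWithinAt
  have hcw : ContinuousOn w (Set.Icc a b) := fun ξ h => (hwd ξ h).continuousAt.continuousWithinAt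
  have hcD : ContinuousOn D (Set.Icc a b) := fun ξ h => (hDd ξ h).continuousAt.continuousWithinAt
  have hce : ContinuousOn e (Set.Icc a b) := fun ξ h => (hed ξ h).continuousAt.continuousWithinAt
  have hcdd : ContinuousOn (fun ξ => -D' ξ / D ξ ^ 2) (Set.Icc a b) :=
    hcD'.neg.div (hcD.pow 2) (fun ξ h => pow_ne_zero _ (hD0 ξ h))
  have hcq' : ContinuousOn q' (Set.Icc a b) :=
    (hcw'.mul (hcD.inv₀ hD0)).add (hcw.mul hcdd)
  have hcr : ContinuousOn (fun ξ => -Complex.I * ((q' ξ : ℂ) * e ξ)) (Set.Icc a b) :=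
    continuousOn_const.mul ((Complex.continuous_ofReal.comp_continuousOn hcq').mul hce)
  have hcB : ContinuousOn (fun ξ => -(w' ξ * m⁻¹) - w a * (-D' ξ / D ξ ^ 2)) (Set.Icc a b) :=
    ((hcw'.mul continuousOn_const).neg).sub (continuousOn_const.mul hcdd)
  have hu : Set.uIcc a b = Set.Icc a b := Set.uIcc_of_le hab
  have i1 : IntervalIntegrable (gI α l) volume a b := (hu ▸ hgc).intervalIntegrable
  have i2 : IntervalIntegrable (fun ξ => -Complex.I * ((q' ξ : ℂ) * e ξ)) volume a b :=
    ContinuousOn.intervalIntegrable (by rwa [hu])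
  have i3 : IntervalIntegrable (fun ξ => -(w' ξ * m⁻¹) - w a * (-D' ξ / D ξ ^ 2)) volume a b :=
    ContinuousOn.intervalIntegrable (by rwa [hu])
  have e1 := intervalIntegral.integral_eq_sub_of_hasDerivAt (by rwa [hu]) (i1.add i2)
  rw [intervalIntegral.integral_add i1 i2] at e1
  have e2 := intervalIntegral.integral_eq_sub_of_hasDerivAt (by rwa [hu]) i3
  have e3 : ‖∫ ξ in a..b, -Complex.I * ((q' ξ : ℂ) * e ξ)‖ ≤ B b - B a := by
    rw [← e2]
    refine intervalIntegral.norm_integral_le_of_norm_le hab (ae_of_all _ fun ξ h => ?_) i3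
    have h' : ξ ∈ Set.Icc a b := Set.Ioc_subset_Icc_self h
    rw [norm_mul, norm_mul, norm_neg, Complex.norm_I, one_mul, norm_exp_I_mul', mul_one,
      Complex.norm_real]
    exact hq'B ξ h'
  have ma : a ∈ Set.Icc a b := ⟨le_rfl, hab⟩
  have mb : b ∈ Set.Icc a b := ⟨hab, le_rfl⟩
  have hHn : ∀ ξ ∈ Set.Icc a b, ‖H ξ‖ ≤ w a * m⁻¹ := by
    intro ξ h
    rw [hHdef]
    simp only
    rw [norm_mul, norm_mul, norm_neg, Complex.norm_I, one_mul, norm_exp_I_mul', mul_one,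
      Complex.norm_real, Real.norm_eq_abs, abs_mul, abs_of_nonneg (hwpos ξ h)]
    exact mul_le_mul (hwle ξ h) (hDinv ξ h) (abs_nonneg _) (hwpos a ma)
  have e4 : B b - B a ≤ 3 * (w a * m⁻¹) := by
    have h1 := abs_le.1 (hDinv a ma)
    have h2 := abs_le.1 (hDinv b mb)
    have h3 := mul_le_mul_of_nonneg_left h1.2 (hwpos a ma)
    have h4 := mul_le_mul_of_nonneg_left h2.1 (hwpos a ma)
    have h5 : 0 ≤ w b * m⁻¹ := mul_nonneg (hwpos b mb) (inv_pos.2 hm).le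
    simp only [hBdef]; linarith
  have e5 : ∫ ξ in a..b, gI α l ξ = H b - H a - ∫ ξ in a..b, -Complex.I * ((q' ξ : ℂ) * e ξ) := by
    rw [← e1]; ring
  rw [e5]
  calc _ ≤ ‖H b - H a‖ + _ := norm_sub_le _ _
    _ ≤ (‖H b‖ + ‖H a‖) + _ := by gcongr; exact norm_sub_le _ _
    _ ≤ (w a * m⁻¹ + w a * m⁻¹) + 3 * (w a * m⁻¹) := by
        gcongr
        · exact hHn b mb
        · exact hHn a ma
        · exact e3.trans e4
    _ = _ := by simp only [hwdef]; ring

lemma rpow_neg_half (a : ℝ) (ha : 0 ≤ a) : a ^ (-(2⁻¹) : ℝ) = (√a)⁻¹ := by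
  rw [Real.rpow_neg ha, Real.sqrt_eq_rpow]; norm_num

lemma vdc' (α l a b m k : ℝ) (hα : 0 < α) (hk : 0 < k) (hka : k ^ 2 ≤ a) (hab : a ≤ b) (hm : 0 < m)
    (hD : ∀ ξ ∈ Set.Icc a b, m ≤ |l + (α + 1) * ξ ^ α|) :
    ‖∫ ξ in a..b, gI α l ξ‖ ≤ 5 / (k * m) := by
  have ha : 0 < a := lt_of_lt_of_le (by positivity) hka
  refine (vdc α l a b m hα ha hab hm hD).trans ?_
  rw [rpow_neg_half a ha.le]
  have : k ≤ √a := Real.le_sqrt_of_sq_le hka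
  calc 5 * ((√a)⁻¹ / m) ≤ 5 * (k⁻¹ / m) := by gcongr
    _ = _ := by field_simp

lemma gI_small (α l ε : ℝ) (hε : 0 ≤ ε) : ‖∫ ξ in (0:ℝ)..(ε ^ 2), gI α l ξ‖ ≤ 2 * ε := by
  have h : IntervalIntegrable (fun x : ℝ => x ^ (-(2⁻¹) : ℝ)) volume 0 (ε ^ 2) :=
    intervalIntegral.intervalIntegrable_rpow' (by norm_num)
  have h1 := intervalIntegral.norm_integral_le_of_norm_le (f := gI α l) (sq_nonneg ε)
    (ae_of_all _ fun x hx => (norm_gI α l x hx.1.le).le) h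
  refine h1.trans (le_of_eq ?_)
  rw [integral_rpow (Or.inl (by norm_num))]
  have : (ε ^ 2) ^ (-(2⁻¹) + 1 : ℝ) = ε := by
    rw [← Real.rpow_natCast, ← Real.rpow_mul hε]; norm_num
  rw [this, Real.zero_rpow (by norm_num)]; norm_num; ring

lemma gI_mid (α l a b k : ℝ) (hk : 0 < k) (hka : k ^ 2 ≤ a) (hab : a ≤ b) :
    ‖∫ ξ in a..b, gI α l ξ‖ ≤ k⁻¹ * (b - a) := by
  have ha : 0 < a := lt_of_lt_of_le (by positivity) hka
  have := intervalIntegral.norm_integral_le_of_norm_le_const (a := a) (b := b) (f := gI α l)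
    (C := k⁻¹) ?_
  · rwa [abs_of_nonneg (by linarith)] at this
  · intro x hx
    rw [Set.uIoc_of_le hab] at hx
    rw [norm_gI _ _ _ (ha.trans hx.1).le, rpow_neg_half _ (ha.trans hx.1).le]
    exact inv_anti₀ hk (Real.le_sqrt_of_sq_le (hka.trans hx.1.le))

lemma key_ineq (α z : ℝ) (hα : 0 < α) (hz : 0 < z) (hz1 : z ≤ 1) :
    min α 1 * (1 - z) ≤ 1 - z ^ α := by
  rcases le_total α 1 with h | h
  · rw [min_eq_left h]
    have := rpow_one_add_le_one_add_mul_self (s := z - 1) (by linarith) hα.le h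
    rw [add_sub_cancel] at this
    linarith
  · rw [min_eq_right h]
    have := Real.rpow_le_rpow_of_exponent_ge hz hz1 h
    rw [Real.rpow_one] at this
    linarith

lemma key_ineq2 (α z : ℝ) (hα : 0 < α) (hz : 0 < z) (hz1 : z ≤ 1) :
    min α 1 * (1 - z) ≤ (z ^ α)⁻¹ - 1 := by
  refine (key_ineq α z hα hz hz1).trans ?_
  have h1 : 0 < z ^ α := Real.rpow_pos_of_pos hz α
  have h2 : 0 < (z ^ α)⁻¹ := inv_pos.2 h1
  have h3 : z ^ α * (z ^ α)⁻¹ = 1 := mul_inv_cancel₀ h1.ne'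
  nlinarith [sq_nonneg (z ^ α - 1), sq_nonneg ((z^α)⁻¹ - 1)]

lemma D_left (α l X z ξ : ℝ) (hα : 0 < α) (hX : 0 < X) (hl : l = -((α + 1) * X ^ α))
    (hz : 0 < z) (hz1 : z ≤ 1) (hξ : 0 ≤ ξ) (h : ξ ≤ X * z) :
    -l * (min α 1 * (1 - z)) ≤ |l + (α + 1) * ξ ^ α| := by
  have h1 : ξ ^ α ≤ X ^ α * z ^ α := by
    rw [← Real.mul_rpow hX.le hz.le]; exact Real.rpow_le_rpow hξ h hα.le
  have h2 : 0 < -l := by rw [hl, neg_neg]; positivity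
  have h3 := mul_le_mul_of_nonneg_left (key_ineq α z hα hz hz1) h2.le
  have h4 := mul_le_mul_of_nonneg_left h1 (by linarith : 0 ≤ α + 1)
  refine h3.trans (le_trans ?_ (neg_le_abs _))
  rw [hl] at *
  linarith

lemma D_right (α l X z ξ : ℝ) (hα : 0 < α) (hX : 0 < X) (hl : l = -((α + 1) * X ^ α))
    (hz : 0 < z) (hz1 : z ≤ 1) (h : X / z ≤ ξ) :
    -l * (min α 1 * (1 - z)) ≤ |l + (α + 1) * ξ ^ α| := by
  have h1 : X ^ α * (z ^ α)⁻¹ ≤ ξ ^ α := by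
    rw [← div_eq_mul_inv, ← Real.div_rpow hX.le hz.le]
    exact Real.rpow_le_rpow (by positivity) h hα.le
  have h2 : 0 < -l := by rw [hl, neg_neg]; positivity
  have h3 := mul_le_mul_of_nonneg_left (key_ineq2 α z hα hz hz1) h2.le
  have h4 := mul_le_mul_of_nonneg_left h1 (by linarith : 0 ≤ α + 1)
  refine h3.trans (le_trans ?_ (le_abs_self _))
  rw [hl] at *
  linarith

lemma decay_pos (α l ε R : ℝ) (hα : 0 < α) (hε : 0 < ε) (hl : 5 / ε ^ 2 ≤ l) (hR : ε ^ 2 ≤ R) :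
    ‖∫ ξ in (0:ℝ)..R, gI α l ξ‖ ≤ 3 * ε := by
  have hl0 : 0 < l := lt_of_lt_of_le (by positivity) hl
  have hR0 : 0 ≤ R := (sq_nonneg ε).trans hR
  rw [← intervalIntegral.integral_add_adjacent_intervals (gI_ii α l 0 (ε^2) le_rfl (sq_nonneg ε))
    (gI_ii α l (ε^2) R (sq_nonneg ε) hR0)]
  have h1 := gI_small α l ε hε.le
  have h2 := vdc' α l (ε^2) R l ε hα hε le_rfl hR hl0 (fun ξ hξ => by
    have : 0 ≤ ξ ^ α := Real.rpow_nonneg ((sq_nonneg ε).trans hξ.1) _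
    have : 0 ≤ (α + 1) * ξ ^ α := by positivity
    exact le_trans (by linarith) (le_abs_self _))
  have h3 : 5 / (ε * l) ≤ ε := by
    rw [div_le_iff₀ (by positivity)] at hl ⊢
    linarith
  refine (norm_add_le _ _).trans ?_
  linarith

lemma decay_neg (α l ε X R : ℝ) (hα : 0 < α) (hε : 0 < ε) (hX : 4 * ε ^ 2 ≤ X)
    (hlX : l = -((α + 1) * X ^ α)) (hl : 25 / (min α 1 * ε ^ 2) ≤ -l) (hR : 2 * X ≤ R) :
    ‖∫ ξ in (0:ℝ)..R, gI α l ξ‖ ≤ 11 * ε := by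
  have hc : 0 < min α 1 := lt_min hα one_pos
  set c := min α 1 with hcdef
  have hl0 : 0 < -l := lt_of_lt_of_le (by positivity) hl
  have hX0 : 0 < X := lt_of_lt_of_le (by positivity) hX
  obtain ⟨r, hr0, hr⟩ : ∃ r, 0 < r ∧ X = r ^ 2 :=
    ⟨√X, Real.sqrt_pos.2 hX0, (Real.sq_sqrt hX0.le).symm⟩
  have hr2 : 2 * ε ≤ r := by
    apply le_of_sq_le_sq _ hr0.le; nlinarith
  obtain ⟨x, hx⟩ : ∃ x, x = 1 - ε / r := ⟨_, rfl⟩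
  have hη : ε / r ≤ 1 / 2 := by rw [div_le_div_iff₀ hr0 two_pos]; linarith
  have hη0 : 0 < ε / r := by positivity
  have hx1 : 1 / 2 ≤ x := by linarith
  have hx2 : x < 1 := by linarith
  have hx0 : 0 < x := by linarith
  have hXx : X ≤ X / x := by rw [le_div_iff₀ hx0]; nlinarith
  have hXx2 : X / x ≤ 2 * X := by rw [div_le_iff₀ hx0]; nlinarith
  have hXx3 : X * x ≤ X := by nlinarith
  have hXx4 : X * (1 / 2) ≤ X * x := by gcongr
  have o1 : ε ^ 2 ≤ X * (1 / 2) := by nlinarith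
  have e0 := sq_nonneg ε
  have p1 : 0 ≤ X * (1 / 2) := by positivity
  have p2 : 0 ≤ X * x := by positivity
  have p3 : 0 ≤ X / x := by positivity
  have p4 : 0 ≤ R := by linarith
  rw [← intervalIntegral.integral_add_adjacent_intervals (gI_ii α l 0 (X / x) le_rfl p3)
      (gI_ii α l (X / x) R p3 p4),
    ← intervalIntegral.integral_add_adjacent_intervals (gI_ii α l 0 (X * x) le_rfl p2)
      (gI_ii α l (X * x) (X / x) p2 p3),
    ← intervalIntegral.integral_add_adjacent_intervals (gI_ii α l 0 (X * (1 / 2)) le_rfl p1)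
      (gI_ii α l (X * (1 / 2)) (X * x) p1 p2),
    ← intervalIntegral.integral_add_adjacent_intervals (gI_ii α l 0 (ε ^ 2) le_rfl e0)
      (gI_ii α l (ε ^ 2) (X * (1 / 2)) e0 p1)]
  have b1 := gI_small α l ε hε.le
  have b2 := vdc' α l (ε^2) (X * (1 / 2)) (-l * (c * (1 - 1 / 2))) ε hα hε le_rfl o1
    (mul_pos hl0 (mul_pos hc (by norm_num)))
    (fun ξ hξ => D_left α l X (1 / 2) ξ hα hX0 hlX (by norm_num) (by norm_num)
      (e0.trans hξ.1) hξ.2)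
  have b3 := vdc' α l (X * (1 / 2)) (X * x) (-l * (c * (1 - x))) (r / 2) hα (by positivity)
    (by nlinarith) hXx4 (mul_pos hl0 (mul_pos hc (by linarith)))
    (fun ξ hξ => D_left α l X x ξ hα hX0 hlX hx0 hx2.le (p1.trans hξ.1) hξ.2)
  have b4 := gI_mid α l (X * x) (X / x) (r / 2) (by positivity) (by nlinarith) (by linarith)
  have b5 := vdc' α l (X / x) R (-l * (c * (1 - x))) r hα hr0
    (by linarith) (by linarith) (mul_pos hl0 (mul_pos hc (by linarith)))
    (fun ξ hξ => D_right α l X x ξ hα hX0 hlX hx0 hx2.le hξ.1)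
  have h1x : 1 - x = ε / r := by linarith
  have c0 : 1 / (c * ε * (-l)) ≤ ε / 25 := by
    rw [div_le_iff₀ (by positivity)] at hl
    rw [div_le_div_iff₀ (by positivity) (by norm_num)]
    linarith
  have c2 : 5 / (ε * (-l * (c * (1 - 1 / 2)))) = 10 * (1 / (c * ε * (-l))) := by
    field_simp; norm_num
  have c3 : 5 / (r / 2 * (-l * (c * (1 - x)))) = 10 * (1 / (c * ε * (-l))) := by
    rw [h1x]; field_simp; norm_num
  have c5 : 5 / (r * (-l * (c * (1 - x)))) = 5 * (1 / (c * ε * (-l))) := by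
    rw [h1x]; field_simp
  have c4 : (r / 2)⁻¹ * (X / x - X * x) ≤ 8 * ε := by
    have : X / x - X * x ≤ X * (4 * (1 - x)) := by
      have : 1 / x - x ≤ 4 * (1 - x) := by
        rw [sub_le_iff_le_add, div_le_iff₀ hx0]; nlinarith
      calc X / x - X * x = X * (1 / x - x) := by ring
        _ ≤ _ := by gcongr
    calc _ ≤ (r / 2)⁻¹ * (X * (4 * (1 - x))) := by gcongr
      _ = 8 * ε := by rw [h1x, hr]; field_simp; norm_num
  rw [c2] at b2; rw [c3] at b3; rw [c5] at b5
  have n1 := norm_add_le (∫ ξ in (0:ℝ)..(ε^2), gI α l ξ) (∫ ξ in (ε^2)..(X*(1/2)), gI α l ξ)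
  refine (norm_add_le _ _).trans ?_
  refine (add_le_add_left ((norm_add_le _ _).trans (add_le_add_left
    ((norm_add_le _ _).trans (add_le_add_left n1 _)) _)) _).trans ?_
  linarith

lemma decay (α ε : ℝ) (hα : 0 < α) (hε : 0 < ε) :
    ∃ L, ∀ l, L ≤ |l| → ∃ R0, ∀ R, R0 ≤ R → ‖∫ ξ in (0:ℝ)..R, gI α l ξ‖ ≤ 11 * ε := by
  have hc : 0 < min α 1 := lt_min hα one_pos
  refine ⟨max (max (5 / ε ^ 2) (25 / (min α 1 * ε ^ 2))) ((α + 1) * (4 * ε ^ 2) ^ α),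
    fun l hl => ?_⟩
  have g1 := (le_max_left _ _).trans ((le_max_left _ _).trans hl)
  have g2 := (le_max_right _ _).trans ((le_max_left _ _).trans hl)
  have g3 := (le_max_right _ _).trans hl
  rcases le_total 0 l with h | h
  · rw [abs_of_nonneg h] at g1
    exact ⟨ε ^ 2, fun R hR => (decay_pos α l ε R hα hε g1 hR).trans (by linarith)⟩
  · rw [abs_of_nonpos h] at g2 g3
    have h0 : 0 ≤ -l / (α + 1) := div_nonneg (by linarith) (by linarith)
    have hX : ((-l / (α + 1)) ^ (α⁻¹)) ^ α = -l / (α + 1) := Real.rpow_inv_rpow h0 hα.ne'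
    refine ⟨2 * (-l / (α + 1)) ^ (α⁻¹), fun R hR =>
      decay_neg α l ε ((-l / (α + 1)) ^ (α⁻¹)) R hα hε ?_ ?_ g2 hR⟩
    · rw [Real.le_rpow_inv_iff_of_pos (by positivity) h0 hα, le_div_iff₀ (by linarith)]
      linarith
    · rw [hX]; field_simp

noncomputable def KI (α l ξ : ℝ) : ℂ := 
    (Real.sign ξ : ℂ) *
      Complex.exp (-Complex.I * (Real.sign ξ : ℂ) * ((Real.pi / 4 : ℝ) : ℂ)) *
      ((|ξ| ^ (-(2⁻¹) : ℝ) : ℝ) : ℂ) *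
      Complex.exp (Complex.I * ((l * ξ + ξ * |ξ| ^ α : ℝ) : ℂ))

noncomputable def cI : ℂ := Complex.exp (-Complex.I * ((Real.pi / 4 : ℝ) : ℂ))
noncomputable def cJ : ℂ := Complex.exp (Complex.I * ((Real.pi / 4 : ℝ) : ℂ))

lemma norm_cI : ‖cI‖ = 1 := by
  have := norm_exp_I_mul' (-(Real.pi / 4))
  rw [cI, ← this]; push_cast; ring_nf
lemma norm_cJ : ‖cJ‖ = 1 := norm_exp_I_mul' _

lemma gI_zero (α l : ℝ) : gI α l 0 = 0 := by
  rw [gI, Real.zero_rpow (by norm_num)]; simp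

lemma KI_pos (α l ξ : ℝ) (h : 0 ≤ ξ) : KI α l ξ = cI * gI α l ξ := by
  rcases h.eq_or_lt with rfl | h
  · rw [gI_zero]; simp [KI]
  · rw [KI, Real.sign_of_pos h, abs_of_pos h, cI, gI]; simp; ring

lemma KI_neg (α l ξ : ℝ) (h : 0 ≤ ξ) :
    KI α l (-ξ) = -cJ * (starRingEnd ℂ) (gI α l ξ) := by
  rcases h.eq_or_lt with rfl | h
  · rw [gI_zero]; simp [KI]
  · rw [KI, Real.sign_of_neg (by linarith), abs_neg, abs_of_pos h, cJ, gI, map_mul, 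
      Complex.conj_ofReal, ← Complex.exp_conj, map_mul, Complex.conj_ofReal, Complex.conj_I]
    have : (Complex.I * ((l * -ξ + -ξ * ξ ^ α : ℝ) : ℂ)) = -Complex.I * ((l * ξ + ξ * ξ ^ α : ℝ) : ℂ) := by
      push_cast; ring
    rw [this]
    push_cast
    simp only [mul_neg, mul_one, neg_neg]
    ring

lemma Fpartial_eq (α l R : ℝ) (hR : 0 ≤ R) :
    Fpartial α l R = cI * (∫ ξ in (0:ℝ)..R, gI α l ξ)
      - cJ * (starRingEnd ℂ) (∫ ξ in (0:ℝ)..R, gI α l ξ) := by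
  have hi := gI_ii α l 0 R le_rfl hR
  have hic : IntervalIntegrable (fun ξ => (starRingEnd ℂ) (gI α l ξ)) volume 0 R :=
    ⟨(Complex.conjCLE.toContinuousLinearMap.integrable_comp hi.1), 
     (Complex.conjCLE.toContinuousLinearMap.integrable_comp hi.2)⟩
  have hu : ∀ ξ ∈ Set.uIcc 0 R, 0 ≤ ξ := fun ξ h => by rw [Set.uIcc_of_le hR] at h; exact h.1
  have i1 : IntervalIntegrable (KI α l) volume 0 R :=
    (intervalIntegrable_congr fun ξ h => KI_pos α l ξ (hu ξ (Set.uIoc_subset_uIcc h))).2 (hi.const_mul cI)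
  have i2' : IntervalIntegrable (fun ξ => KI α l (-ξ)) volume 0 R :=
    (intervalIntegrable_congr fun ξ h => KI_neg α l ξ (hu ξ (Set.uIoc_subset_uIcc h))).2
      (hic.const_mul (-cJ))
  have i2 : IntervalIntegrable (KI α l) volume (-R) 0 := by
    have := (IntervalIntegrable.iff_comp_neg (f := KI α l) (a := 0) (b := -R)).2
    simp only [neg_zero, neg_neg] at this
    exact (this i2').symm
  have hF : Fpartial α l R = ∫ ξ in (-R)..R, KI α l ξ := rfl
  rw [hF, ← intervalIntegral.integral_add_adjacent_intervals i2 i1]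
  have e1 : ∫ ξ in (0:ℝ)..R, KI α l ξ = cI * (∫ ξ in (0:ℝ)..R, gI α l ξ) := by
    rw [← intervalIntegral.integral_const_mul]
    exact intervalIntegral.integral_congr fun ξ h => KI_pos α l ξ (hu ξ h)
  have e2 : ∫ ξ in (-R)..0, KI α l ξ = -cJ * (starRingEnd ℂ) (∫ ξ in (0:ℝ)..R, gI α l ξ) := by
    have h1 := intervalIntegral.integral_comp_neg (a := 0) (b := R) (KI α l)
    rw [neg_zero] at h1
    rw [← h1]
    have h2 : (starRingEnd ℂ) (∫ ξ in (0:ℝ)..R, gI α l ξ)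
        = ∫ ξ in (0:ℝ)..R, (starRingEnd ℂ) (gI α l ξ) := by
      rw [intervalIntegral.integral_of_le hR, intervalIntegral.integral_of_le hR]
      exact integral_conj.symm
    rw [h2, ← intervalIntegral.integral_const_mul]
    exact intervalIntegral.integral_congr fun ξ h => KI_neg α l ξ (hu ξ h)
  rw [e1, e2]; ring

lemma norm_lin (z : ℂ) : ‖cI * z - cJ * (starRingEnd ℂ) z‖ ≤ 2 * ‖z‖ := by
  refine (norm_sub_le _ _).trans (le_of_eq ?_)
  rw [norm_mul, norm_mul, norm_cI, norm_cJ, RCLike.norm_conj]; ring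

lemma Fpartial_cont (α R : ℝ) (hR : 0 ≤ R) : Continuous (fun l => Fpartial α l R) := by
  have h : Continuous (fun l => ∫ ξ in (0:ℝ)..R, gI α l ξ) := by
    refine intervalIntegral.continuous_of_dominated_interval
      (bound := fun x : ℝ => x ^ (-(2⁻¹) : ℝ))
      (fun l => (gI_meas α l).aestronglyMeasurable) ?_ 
      (intervalIntegral.intervalIntegrable_rpow' (by norm_num)) ?_
    · refine fun l => ae_of_all _ fun ξ hξ => ?_
      rw [Set.uIoc_of_le hR] at hξ
      exact (norm_gI α l ξ hξ.1.le).le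
    · refine ae_of_all _ fun ξ hξ => ?_
      unfold gI; fun_prop
  have e : (fun l => Fpartial α l R) = fun l => cI * (∫ ξ in (0:ℝ)..R, gI α l ξ)
      - cJ * (starRingEnd ℂ) (∫ ξ in (0:ℝ)..R, gI α l ξ) := funext fun l => Fpartial_eq α l R hR
  rw [e]
  exact (continuous_const.mul h).sub (continuous_const.mul (Complex.continuous_conj.comp h))

lemma F_approx (α L : ℝ) (hα : 0 < α) (F : ℝ → ℂ)
    (hF : ∀ l : ℝ, Tendsto (fun R : ℝ => Fpartial α l R) atTop (nhds (F l)))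
    (R : ℝ) (hR0 : 0 < R) (hR : L + 1 ≤ (α + 1) * R ^ α) (l : ℝ) (hl : |l| ≤ L) :
    ‖F l - Fpartial α l R‖ ≤ 10 / √R := by
  refine le_of_tendsto ((hF l).sub_const _).norm ?_
  filter_upwards [eventually_ge_atTop R] with R' hR'
  rw [Fpartial_eq α l R hR0.le, Fpartial_eq α l R' (hR0.le.trans hR'),
    ← intervalIntegral.integral_add_adjacent_intervals (gI_ii α l 0 R le_rfl hR0.le)
      (gI_ii α l R R' hR0.le (hR0.le.trans hR'))]
  have h1 := vdc' α l R R' 1 (√R) hα (Real.sqrt_pos.2 hR0) (Real.sq_sqrt hR0.le).le hR' one_pos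
    (fun ξ hξ => by
      have : (α + 1) * R ^ α ≤ (α + 1) * ξ ^ α := by
        gcongr; exact hξ.1
      have := (abs_le.1 hl).1
      exact le_trans (by linarith) (le_abs_self _))
  have h2 := norm_lin (∫ ξ in R..R', gI α l ξ)
  rw [map_add]
  calc _ = ‖cI * (∫ ξ in R..R', gI α l ξ) - cJ * (starRingEnd ℂ) (∫ ξ in R..R', gI α l ξ)‖ := by
        congr 1; ring
    _ ≤ 2 * (5 / (√R * 1)) := h2.trans (by gcongr)
    _ = _ := by ring

lemma F_cont (α : ℝ) (hα : 0 < α) (F : ℝ → ℂ)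
    (hF : ∀ l : ℝ, Tendsto (fun R : ℝ => Fpartial α l R) atTop (nhds (F l))) : Continuous F := by
  refine continuous_of_locally_uniform_approx_of_continuousAt fun l0 u hu => ?_
  obtain ⟨ε, hε, hεu⟩ := Metric.mem_uniformity_dist.1 hu
  have t1 : Tendsto (fun R : ℝ => (α + 1) * R ^ α) atTop atTop :=
    (tendsto_rpow_atTop hα).const_mul_atTop (by linarith)
  have t2 : Tendsto (fun R : ℝ => 10 / √R) atTop (nhds 0) :=
    tendsto_const_nhds.div_atTop Real.tendsto_sqrt_atTop
  obtain ⟨R, h1, h2, h3⟩ := ((t1.eventually_ge_atTop (|l0| + 1 + 1)).and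
    ((t2.eventually_lt_const hε).and (eventually_gt_atTop 0))).exists
  refine ⟨Metric.ball l0 1, Metric.ball_mem_nhds _ one_pos, fun l => Fpartial α l R,
    (Fpartial_cont α R h3.le).continuousAt, fun l hl => hεu ?_⟩
  rw [dist_eq_norm]
  refine (F_approx α (|l0| + 1) hα F hF R h3 h1 l ?_).trans_lt h2
  rw [Metric.mem_ball, Real.dist_eq] at hl
  have := abs_sub_abs_le_abs_sub l l0
  linarith

lemma F_zero (α : ℝ) (hα : 0 < α) (F : ℝ → ℂ)
    (hF : ∀ l : ℝ, Tendsto (fun R : ℝ => Fpartial α l R) atTop (nhds (F l))) :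
    Tendsto F (cocompact ℝ) (nhds 0) := by
  rw [Metric.tendsto_nhds]
  intro ε hε
  obtain ⟨L, hL⟩ := decay α (ε / 44) hα (by positivity)
  filter_upwards [(tendsto_norm_cocompact_atTop (E := ℝ)).eventually_ge_atTop L] with l hl
  obtain ⟨R0, hR0⟩ := hL l hl
  rw [dist_zero_right]
  have : ‖F l‖ ≤ ε / 2 := by
    refine le_of_tendsto (hF l).norm ?_
    filter_upwards [eventually_ge_atTop R0, eventually_ge_atTop 0] with R h1 h2
    rw [Fpartial_eq α l R h2]
    refine (norm_lin _).trans ?_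
    linarith [hR0 R h1]
  linarith

lemma F_bdd (F : ℝ → ℂ) (hc : Continuous F) (h0 : Tendsto F (cocompact ℝ) (nhds 0)) :
    ∃ C, 0 ≤ C ∧ ∀ l, ‖F l‖ ≤ C := by
  obtain ⟨C, hC⟩ := (ZeroAtInftyContinuousMap.isBounded_range (⟨⟨F, hc⟩, h0⟩ : ZeroAtInftyContinuousMap ℝ ℂ)).exists_norm_le
  exact ⟨C, (norm_nonneg _).trans (hC (F 0) ⟨0, rfl⟩), fun l => hC _ ⟨l, rfl⟩⟩

noncomputable def cv (Φ h : ℝ × ℝ → ℂ) (x y : ℝ) : ℂ := ∫ p : ℝ × ℝ, Φ (x - p.1, y - p.2) * h p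

lemma cv_int (Φ h : ℝ × ℝ → ℂ) (M : ℝ) (hc : Continuous Φ) (hM : ∀ q, ‖Φ q‖ ≤ M)
    (hh : Integrable h) (x y : ℝ) :
    Integrable (fun p : ℝ × ℝ => Φ (x - p.1, y - p.2) * h p) :=
  hh.bdd_mul (c := M) (Continuous.aestronglyMeasurable (by fun_prop)) (ae_of_all _ fun _ => hM _)

lemma cv_bound (Φ h : ℝ × ℝ → ℂ) (M : ℝ) (hM : ∀ q, ‖Φ q‖ ≤ M)
    (hh : Integrable h) (x y : ℝ) : ‖cv Φ h x y‖ ≤ M * ∫ p, ‖h p‖ := by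
  rw [cv, ← integral_const_mul]
  refine norm_integral_le_of_norm_le (hh.norm.const_mul M) (ae_of_all _ fun p => ?_)
  rw [norm_mul]; gcongr; exact hM _

lemma cv_cont (Φ h : ℝ × ℝ → ℂ) (M : ℝ) (hc : Continuous Φ) (hM : ∀ q, ‖Φ q‖ ≤ M)
    (hh : Integrable h) (y : ℝ) : Continuous (fun x => cv Φ h x y) := by
  refine continuous_of_dominated (bound := fun p => M * ‖h p‖)
    (fun x => (cv_int Φ h M hc hM hh x y).aestronglyMeasurable) (fun x => ae_of_all _ fun p => ?_)
    (hh.norm.const_mul M) (ae_of_all _ fun p => by fun_prop)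
  rw [norm_mul]; gcongr; exact hM _

def isDx (f g : ℝ × ℝ → ℂ) : Prop := ∀ ψ : ℝ × ℝ → ℂ,
      ContDiff ℝ (⊤ : ℕ∞) ψ → HasCompactSupport ψ →
      ∫ p : ℝ × ℝ, f p * deriv (fun x : ℝ => ψ (x, p.2)) p.1 = -∫ p : ℝ × ℝ, g p * ψ p

lemma cv_test (φ f g : ℝ × ℝ → ℂ) (hφ : ContDiff ℝ (⊤ : ℕ∞) φ) (hs : HasCompactSupport φ)
    (hf : Integrable f) (hd : isDx f g) (x y : ℝ) :
    HasDerivAt (fun x => cv φ f x y) (cv φ g x y) x := by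
  obtain ⟨M, hM⟩ := hs.exists_bound_of_continuous hφ.continuous
  have hdc : Continuous (fun q => fderiv ℝ φ q (1, 0)) :=
    (hφ.continuous_fderiv (by simp)).clm_apply continuous_const
  have hds : HasCompactSupport (fun q => fderiv ℝ φ q (1, 0)) := hs.fderiv_apply ℝ _
  obtain ⟨K, hK⟩ := hds.exists_bound_of_continuous hdc
  have hdiff : ∀ q, HasFDerivAt φ (fderiv ℝ φ q) q := fun q =>
    (hφ.differentiable (by simp) q).hasFDerivAt
  have key := (hasDerivAt_integral_of_dominated_loc_of_deriv_le (𝕜 := ℝ) (μ := volume)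
    (F := fun x (p : ℝ × ℝ) => φ (x - p.1, y - p.2) * f p)
    (F' := fun x (p : ℝ × ℝ) => fderiv ℝ φ (x - p.1, y - p.2) (1, 0) * f p)
    (bound := fun p => K * ‖f p‖) (x₀ := x) (s := Set.univ) univ_mem
    (Eventually.of_forall fun x => (cv_int φ f M hφ.continuous hM hf x y).aestronglyMeasurable)
    (cv_int φ f M hφ.continuous hM hf x y)
    (cv_int _ f K hdc hK hf x y).aestronglyMeasurable
    (ae_of_all _ fun p x _ => by rw [norm_mul]; gcongr; exact hK _)
    (hf.norm.const_mul K)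
    (ae_of_all _ fun p x _ => by
      have h1 : HasDerivAt (fun x : ℝ => (x - p.1, y - p.2)) (1, 0) x :=
        ((hasDerivAt_id x).sub_const _).prodMk (hasDerivAt_const x _)
      exact ((hdiff (x - p.1, y - p.2)).comp_hasDerivAt x h1).mul_const (f p))).2
  refine key.congr_deriv ?_
  have h2 := hd (fun p => φ ((x, y) - p)) (hφ.comp (contDiff_const.sub contDiff_id))
    (hs.comp_homeomorph (Homeomorph.subLeft (x, y)))
  have h3 : ∀ p : ℝ × ℝ, deriv (fun x' : ℝ => φ ((x, y) - (x', p.2))) p.1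
      = -fderiv ℝ φ (x - p.1, y - p.2) (1, 0) := by
    intro p
    have h1 : HasDerivAt (fun x' : ℝ => (x - x', y - p.2)) (-1, 0) p.1 :=
      ((hasDerivAt_id p.1).const_sub _).prodMk (hasDerivAt_const _ _)
    have h4 := ((hdiff (x - p.1, y - p.2)).comp_hasDerivAt p.1 h1).deriv
    have h5 : ((-1, 0) : ℝ × ℝ) = -(1, 0) := by simp
    rw [h5, map_neg] at h4
    exact h4
  simp only [h3, mul_neg, integral_neg, neg_inj] at h2
  rw [cv]
  calc _ = ∫ p : ℝ × ℝ, f p * fderiv ℝ φ (x - p.1, y - p.2) (1, 0) := by simp only [mul_comm]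
    _ = ∫ p : ℝ × ℝ, g p * φ ((x, y) - p) := h2
    _ = _ := by
      congr 1; ext p; rw [mul_comm]; rfl

lemma approx_test (Φ : ℝ × ℝ → ℂ) (M : ℝ) (hc : Continuous Φ) (hM : ∀ q, ‖Φ q‖ ≤ M) :
    ∃ φ : ℕ → ℝ × ℝ → ℂ, (∀ n, ContDiff ℝ (⊤ : ℕ∞) (φ n)) ∧ (∀ n, HasCompactSupport (φ n)) ∧
      (∀ n q, ‖φ n q‖ ≤ M + 1) ∧ ∀ q, Tendsto (fun n => φ n q) atTop (nhds (Φ q)) := by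
  have h1 : ∀ n : ℕ, ∃ θ : ℝ × ℝ → ℂ, ContDiff ℝ (⊤ : ℕ∞) θ ∧
      ∀ q, dist (θ q) (Φ q) < 1 / ((n : ℝ) + 1) := fun n => by
    obtain ⟨θ, a, b, -⟩ := hc.exists_contDiff_approx (⊤ : ℕ∞)
      (ε := fun _ => 1 / ((n : ℝ) + 1)) continuous_const (fun _ => by positivity)
    exact ⟨θ, a, b⟩
  choose θ hθ hθd using h1
  let χ : ∀ n : ℕ, ContDiffBump (0 : ℝ × ℝ) := fun n =>
    ⟨(n : ℝ) + 1, (n : ℝ) + 2, by positivity, by linarith⟩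
  refine ⟨fun n q => ((χ n q : ℝ) : ℂ) * θ n q, fun n => ?_, fun n => ?_, fun n q => ?_, fun q => ?_⟩
  · exact (Complex.ofRealCLM.contDiff.comp (χ n).contDiff).mul (hθ n)
  · exact ((χ n).hasCompactSupport.comp_left (g := fun r : ℝ => (r : ℂ)) Complex.ofReal_zero).mul_right
  · rw [norm_mul, Complex.norm_real, Real.norm_of_nonneg (χ n).nonneg]
    have h2 : ‖θ n q‖ ≤ M + 1 := by
      have h3 := (hθd n q).le
      have h4 : 1 / ((n : ℝ) + 1) ≤ 1 := by
        rw [div_le_one (by positivity)]; linarith [(Nat.cast_nonneg n : (0:ℝ) ≤ n)]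
      rw [dist_eq_norm] at h3
      have h5 := norm_le_norm_add_norm_sub' (θ n q) (Φ q)
      linarith [hM q]
    calc _ ≤ 1 * ‖θ n q‖ := by gcongr; exact (χ n).le_one
      _ ≤ _ := by rw [one_mul]; exact h2
  · have h2 : Tendsto (fun n => θ n q) atTop (nhds (Φ q)) := by
      rw [tendsto_iff_dist_tendsto_zero]
      exact squeeze_zero (fun _ => dist_nonneg) (fun n => (hθd n q).le)
        tendsto_one_div_add_atTop_nhds_zero_nat
    refine h2.congr' ?_
    obtain ⟨N, hN⟩ := exists_nat_ge ‖q‖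
    filter_upwards [eventually_ge_atTop N] with n hn
    have : (χ n) q = 1 := (χ n).one_of_mem_closedBall (by
      rw [mem_closedBall_zero_iff]
      have : (N : ℝ) ≤ n := by exact_mod_cast hn
      change ‖q‖ ≤ (n : ℝ) + 1
      linarith)
    rw [this]; simp

lemma cv_tendsto {ι : Type*} {L : Filter ι} [L.IsCountablyGenerated] (φ : ι → ℝ × ℝ → ℂ)
    (Φ h : ℝ × ℝ → ℂ) (M : ℝ)
    (hc : ∀ n, Continuous (φ n)) (hM : ∀ n q, ‖φ n q‖ ≤ M)
    (hl : ∀ q, Tendsto (fun n => φ n q) L (nhds (Φ q))) (hh : Integrable h) (x y : ℝ) :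
    Tendsto (fun n => cv (φ n) h x y) L (nhds (cv Φ h x y)) := by
  refine tendsto_integral_filter_of_dominated_convergence (fun p => M * ‖h p‖)
    (Eventually.of_forall fun n => (cv_int (φ n) h M (hc n) (hM n) hh x y).aestronglyMeasurable)
    (Eventually.of_forall fun n => ae_of_all _ fun p => ?_) (hh.norm.const_mul M)
    (ae_of_all _ fun p => (hl _).mul_const _)
  rw [norm_mul]; gcongr; exact hM _ _

lemma cv_deriv (Φ f g : ℝ × ℝ → ℂ) (M : ℝ) (hc : Continuous Φ) (hM : ∀ q, ‖Φ q‖ ≤ M)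
    (hf : Integrable f) (hg : Integrable g) (hd : isDx f g) (x y : ℝ) :
    HasDerivAt (fun x => cv Φ f x y) (cv Φ g x y) x := by
  obtain ⟨φ, h1, h2, h3, h4⟩ := approx_test Φ M hc hM
  have hcg := cv_cont Φ g M hc hM hg y
  have e : ∀ b, ∫ r in (0:ℝ)..b, cv Φ g r y = cv Φ f b y - cv Φ f 0 y := by
    intro b
    have e1 : ∀ n, ∫ r in (0:ℝ)..b, cv (φ n) g r y = cv (φ n) f b y - cv (φ n) f 0 y := fun n =>
      intervalIntegral.integral_eq_sub_of_hasDerivAt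
        (fun r _ => cv_test (φ n) f g (h1 n) (h2 n) hf hd r y)
        ((cv_cont (φ n) g (M + 1) (h1 n).continuous (h3 n) hg y).intervalIntegrable _ _)
    have t1 := (cv_tendsto φ Φ f (M + 1) (fun n => (h1 n).continuous) h3 h4 hf b y).sub
      (cv_tendsto φ Φ f (M + 1) (fun n => (h1 n).continuous) h3 h4 hf 0 y)
    have t2 : Tendsto (fun n => ∫ r in (0:ℝ)..b, cv (φ n) g r y) atTop
        (nhds (∫ r in (0:ℝ)..b, cv Φ g r y)) := by
      refine intervalIntegral.tendsto_integral_filter_of_dominated_convergence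
        (fun _ => (M + 1) * ∫ p, ‖g p‖)
        (Eventually.of_forall fun n => 
          (cv_cont (φ n) g (M + 1) (h1 n).continuous (h3 n) hg y).aestronglyMeasurable)
        (Eventually.of_forall fun n => ae_of_all _ fun r _ => cv_bound (φ n) g (M + 1) (h3 n) hg r y)
        intervalIntegrable_const
        (ae_of_all _ fun r _ => cv_tendsto φ Φ g (M + 1) (fun n => (h1 n).continuous) h3 h4 hg r y)
    simp only [e1] at t2
    exact tendsto_nhds_unique t2 t1
  have h5 := (hcg.integral_hasStrictDerivAt 0 x).hasDerivAt
  simp only [e] at h5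
  simpa using h5.add_const (cv Φ f 0 y)

noncomputable def PA (F : ℝ → ℂ) (α τ : ℝ) : ℝ × ℝ → ℂ := fun q => Akernel F α τ q.1 q.2

lemma PA_cont (F : ℝ → ℂ) (α τ : ℝ) (hF : Continuous F) : Continuous (PA F α τ) := by
  unfold PA Akernel selfSim; fun_prop

lemma PA_contAt (F : ℝ → ℂ) (α τ : ℝ) (hF : Continuous F) (hτ : 0 < τ) (q : ℝ × ℝ) :
    ContinuousAt (fun τ => PA F α τ q) τ := by
  have h : ∀ r : ℝ, ContinuousAt (fun τ : ℝ => τ ^ r) τ := fun r =>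
    Real.continuousAt_rpow_const _ _ (Or.inl hτ.ne')
  have hp : 4 * τ ^ ((α + 2) / (α + 1) : ℝ) ≠ 0 := by positivity
  have h1 : ContinuousAt (fun τ => selfSim α τ q.1 q.2) τ := by
    unfold selfSim
    exact (continuousAt_const.mul (h _)).add
      (continuousAt_const.div (continuousAt_const.mul (h _)) hp)
  unfold PA Akernel
  exact (Complex.continuous_ofReal.continuousAt.comp (h _)).mul
    (ContinuousAt.comp (f := fun τ => selfSim α τ q.1 q.2) hF.continuousAt h1)

lemma PA_bound (F : ℝ → ℂ) (α τ C : ℝ) (hC : ∀ l, ‖F l‖ ≤ C) (hτ : 0 ≤ τ) (q : ℝ × ℝ) :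
    ‖PA F α τ q‖ ≤ C * τ ^ (-((α + 2) / (2 * (α + 1))) : ℝ) := by
  unfold PA Akernel
  rw [norm_mul, Complex.norm_real, Real.norm_of_nonneg (Real.rpow_nonneg hτ _), mul_comm]
  gcongr; exact hC _

lemma PA_zero (F : ℝ → ℂ) (α τ : ℝ) (h0 : Tendsto F (cocompact ℝ) (nhds 0)) (hτ : 0 < τ) (a y : ℝ) :
    Tendsto (fun x => PA F α τ (x - a, y)) (cocompact ℝ) (nhds 0) := by
  have hk : 0 < τ ^ (-(1 / (α + 1)) : ℝ) := Real.rpow_pos_of_pos hτ _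
  have h1 : Tendsto (fun x => selfSim α τ (x - a) y) (cocompact ℝ) (cocompact ℝ) := by
    unfold selfSim
    rw [cocompact_eq_atBot_atTop]
    refine Tendsto.sup_sup ?_ ?_
    · exact tendsto_atBot_add_const_right _ _
        ((tendsto_atBot_add_const_right _ (-a) tendsto_id).atBot_mul_const hk)
    · exact tendsto_atTop_add_const_right _ _
        ((tendsto_atTop_add_const_right _ (-a) tendsto_id).atTop_mul_const hk)
  have := (h0.comp h1).const_mul ((τ ^ (-((α + 2) / (2 * (α + 1))) : ℝ) : ℝ) : ℂ)
  rw [mul_zero] at this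
  exact this

lemma norm_bdd (T : ℝ) (h : ℝ → ℝ × ℝ → ℂ)
    (hInt : ∀ s ∈ Set.Icc (0 : ℝ) T, Integrable (h s))
    (hCont : ∀ s ∈ Set.Icc (0 : ℝ) T,
      Tendsto (fun s' : ℝ => ∫ p : ℝ × ℝ, ‖h s' p - h s p‖)
        (nhdsWithin s (Set.Icc (0 : ℝ) T)) (nhds 0)) :
    ∃ K, ∀ s ∈ Set.Icc (0 : ℝ) T, ∫ p, ‖h s p‖ ≤ K := by
  have hc : ContinuousOn (fun s => ∫ p, ‖h s p‖) (Set.Icc 0 T) := by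
    intro s hs
    rw [ContinuousWithinAt, tendsto_iff_dist_tendsto_zero]
    refine squeeze_zero' (Eventually.of_forall fun _ => dist_nonneg) ?_ (hCont s hs)
    filter_upwards [self_mem_nhdsWithin] with s' hs'
    rw [Real.dist_eq, ← integral_sub (hInt s' hs').norm (hInt s hs).norm]
    refine (abs_integral_le_integral_abs).trans ?_
    exact integral_mono ((hInt s' hs').norm.sub (hInt s hs).norm).abs
      ((hInt s' hs').sub (hInt s hs)).norm (fun p => abs_norm_sub_norm_le _ _)
  obtain ⟨K, hK⟩ := isCompact_Icc.exists_bound_of_continuousOn hc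
  exact ⟨K, fun s hs => (le_abs_self _).trans (hK s hs)⟩

lemma J_cont (F : ℝ → ℂ) (α T C : ℝ) (hα : 0 < α) (hF : Continuous F) (hC0 : 0 ≤ C)
    (hC : ∀ l, ‖F l‖ ≤ C) (h : ℝ → ℝ × ℝ → ℂ)
    (hInt : ∀ s ∈ Set.Icc (0 : ℝ) T, Integrable (h s))
    (hCont : ∀ s ∈ Set.Icc (0 : ℝ) T,
      Tendsto (fun s' : ℝ => ∫ p : ℝ × ℝ, ‖h s' p - h s p‖)
        (nhdsWithin s (Set.Icc (0 : ℝ) T)) (nhds 0)) (t : ℝ) (ht : t ≤ T) (x y : ℝ) :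
    ContinuousOn (fun s => cv (PA F α (t - s)) (h s) x y) (Set.Ioo 0 t) := by
  intro s0 hs0
  have hβ : -((α + 2) / (2 * (α + 1))) ≤ 0 := by
    have : 0 ≤ (α + 2) / (2 * (α + 1)) := by positivity
    linarith
  have hI : s0 ∈ Set.Icc 0 T := ⟨hs0.1.le, hs0.2.le.trans ht⟩
  have hτ : 0 < (t - s0) / 2 := by linarith [hs0.2]
  obtain ⟨M, hMd⟩ : ∃ M, M = C * ((t - s0) / 2) ^ (-((α + 2) / (2 * (α + 1))) : ℝ) := ⟨_, rfl⟩
  have hM : ∀ s, s < s0 + (t - s0) / 2 → ∀ q, ‖PA F α (t - s) q‖ ≤ M := by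
    intro s hs q
    refine (PA_bound F α (t - s) C hC (by linarith) q).trans ?_
    rw [hMd]
    exact mul_le_mul_of_nonneg_left
      (Real.rpow_le_rpow_of_nonpos hτ (by linarith) hβ) hC0
  have hnb : Set.Ioo 0 (s0 + (t - s0) / 2) ∈ nhds s0 := Ioo_mem_nhds hs0.1 (by linarith)
  have hsub : Set.Ioo 0 (s0 + (t - s0) / 2) ⊆ Set.Icc 0 T := fun s hs =>
    ⟨hs.1.le, by linarith [hs.2, hs0.2]⟩
  apply ContinuousAt.continuousWithinAt
  have t1 : Tendsto (fun s => cv (PA F α (t - s)) (h s0) x y) (nhds s0)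
      (nhds (cv (PA F α (t - s0)) (h s0) x y)) := by
    refine tendsto_integral_filter_of_dominated_convergence (fun p => M * ‖h s0 p‖) ?_ ?_
      ((hInt s0 hI).norm.const_mul M) (ae_of_all _ fun p => ?_)
    · filter_upwards [hnb] with s hs
      exact (cv_int _ _ M (PA_cont F α _ hF) (hM s hs.2) (hInt s0 hI) x y).aestronglyMeasurable
    · filter_upwards [hnb] with s hs
      refine ae_of_all _ fun p => ?_
      rw [norm_mul]; gcongr; exact hM s hs.2 _
    · refine Tendsto.mul_const _ ?_
      have := PA_contAt F α (t - s0) hF (by linarith) (x - p.1, y - p.2)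
      exact ContinuousAt.comp (f := fun s => t - s) this
        (continuousAt_const.sub continuousAt_id)
  have t2 : Tendsto (fun s => cv (PA F α (t - s)) (fun p => h s p - h s0 p) x y) (nhds s0)
      (nhds 0) := by
    have hc := (hCont s0 hI).mono_left (le_of_eq (nhdsWithin_eq_nhds.2
      (mem_of_superset hnb hsub)).symm)
    have hc2 := hc.const_mul M
    rw [mul_zero] at hc2
    refine squeeze_zero_norm' ?_ hc2
    filter_upwards [hnb] with s hs
    exact cv_bound _ _ M (hM s hs.2) ((hInt s (hsub hs)).sub (hInt s0 hI)) x y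
  have t3 := t2.add t1
  rw [zero_add] at t3
  refine Tendsto.congr' ?_ t3
  filter_upwards [hnb] with s hs
  have hc := PA_cont F α (t - s) hF
  unfold cv
  refine (integral_add (cv_int _ _ M hc (hM s hs.2) ((hInt s (hsub hs)).sub (hInt s0 hI)) x y)
    (cv_int _ _ M hc (hM s hs.2) (hInt s0 hI) x y)).symm.trans ?_
  congr 1; ext p; simp only [Pi.sub_apply]; ring

lemma bound_int (β t D : ℝ) (ht : 0 < t) (hβ : β < 1) :
    IntegrableOn (fun s : ℝ => D * (t - s) ^ (-β)) (Set.Ioo 0 t) := by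
  have h : IntervalIntegrable (fun x : ℝ => x ^ (-β)) volume 0 t :=
    intervalIntegral.intervalIntegrable_rpow' (by linarith)
  have h2 := (h.comp_sub_left t).symm
  rw [sub_zero, sub_self, intervalIntegrable_iff_integrableOn_Ioo_of_le ht.le] at h2
  exact Integrable.const_mul h2 D

/-- Treatment of the Duhamel term: if `f : [0,T] → L¹(ℝ²)` is continuous and `g(s)` is
the distributional `x`-derivative of `f(s)`, then for `t ∈ (0,T]` the function
`W(t,x,y) = ∫_0^t ∫_{ℝ²} A(t-s, x-x', y-y') f(s,x',y') dx'dy'ds` is well defined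
(its inner integral is bounded by `c(t-s)^{-(α+2)/(2(α+1))}‖f(s)‖_{L¹}`, integrable in `s`
since `(α+2)/(2(α+1)) < 1`), is continuously differentiable in `x` with
`∂ₓW` given by the same expression with `g` in place of `f`, and `W(t,x,y) → 0` as
`|x| → ∞` for fixed `y` and `t ∈ (0,T]`. -/
theorem duhamel_term_properties (α T : ℝ) (hα : 0 < α) (hT : 0 < T)
    (F : ℝ → ℂ)
    (hF : ∀ l : ℝ, Tendsto (fun R : ℝ => Fpartial α l R) atTop (nhds (F l)))
    (f g : ℝ → ℝ × ℝ → ℂ)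
    (hfInt : ∀ s ∈ Set.Icc (0 : ℝ) T, Integrable (f s))
    (hgInt : ∀ s ∈ Set.Icc (0 : ℝ) T, Integrable (g s))
    (hfCont : ∀ s ∈ Set.Icc (0 : ℝ) T,
      Tendsto (fun s' : ℝ => ∫ p : ℝ × ℝ, ‖f s' p - f s p‖)
        (nhdsWithin s (Set.Icc (0 : ℝ) T)) (nhds 0))
    (hgCont : ∀ s ∈ Set.Icc (0 : ℝ) T,
      Tendsto (fun s' : ℝ => ∫ p : ℝ × ℝ, ‖g s' p - g s p‖)
        (nhdsWithin s (Set.Icc (0 : ℝ) T)) (nhds 0))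
    (hdistrib : ∀ s ∈ Set.Icc (0 : ℝ) T, ∀ ψ : ℝ × ℝ → ℂ,
      ContDiff ℝ (⊤ : ℕ∞) ψ → HasCompactSupport ψ →
      ∫ p : ℝ × ℝ, f s p * deriv (fun x : ℝ => ψ (x, p.2)) p.1 =
        -∫ p : ℝ × ℝ, g s p * ψ p) :
    (α + 2) / (2 * (α + 1)) < 1 ∧
    ∀ t ∈ Set.Ioc (0 : ℝ) T,
      (∃ C : ℝ, ∀ s ∈ Set.Ioo (0 : ℝ) t, ∀ x y : ℝ,
        Integrable (fun p : ℝ × ℝ => Akernel F α (t - s) (x - p.1) (y - p.2) * f s p) ∧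
        ‖∫ p : ℝ × ℝ, Akernel F α (t - s) (x - p.1) (y - p.2) * f s p‖ ≤
          C * (t - s) ^ (-((α + 2) / (2 * (α + 1))) : ℝ) * ∫ p : ℝ × ℝ, ‖f s p‖) ∧
      (∀ x y : ℝ, IntegrableOn
        (fun s : ℝ => ∫ p : ℝ × ℝ, Akernel F α (t - s) (x - p.1) (y - p.2) * f s p)
        (Set.Ioo (0 : ℝ) t)) ∧
      (∀ y x : ℝ, HasDerivAt
        (fun x' : ℝ => ∫ s in Set.Ioo (0 : ℝ) t,
          ∫ p : ℝ × ℝ, Akernel F α (t - s) (x' - p.1) (y - p.2) * f s p)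
        (∫ s in Set.Ioo (0 : ℝ) t,
          ∫ p : ℝ × ℝ, Akernel F α (t - s) (x - p.1) (y - p.2) * g s p) x) ∧
      (∀ y : ℝ, Continuous (fun x : ℝ => ∫ s in Set.Ioo (0 : ℝ) t,
          ∫ p : ℝ × ℝ, Akernel F α (t - s) (x - p.1) (y - p.2) * g s p)) ∧
      (∀ y : ℝ, Tendsto (fun x : ℝ => ∫ s in Set.Ioo (0 : ℝ) t,
          ∫ p : ℝ × ℝ, Akernel F α (t - s) (x - p.1) (y - p.2) * f s p)
        (cocompact ℝ) (nhds 0)) := by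
  have hβ : (α + 2) / (2 * (α + 1)) < 1 := by
    rw [div_lt_one (by positivity)]; linarith
  refine ⟨hβ, fun t ht => ?_⟩
  have hFc := F_cont α hα F hF
  have hF0 := F_zero α hα F hF
  obtain ⟨C, hC0, hC⟩ := F_bdd F hFc hF0
  have hsub : ∀ s ∈ Set.Ioo (0 : ℝ) t, s ∈ Set.Icc (0 : ℝ) T := fun s hs =>
    ⟨hs.1.le, hs.2.le.trans ht.2⟩
  have hPb : ∀ s ∈ Set.Ioo (0 : ℝ) t, ∀ q, ‖PA F α (t - s) q‖ ≤
      C * (t - s) ^ (-((α + 2) / (2 * (α + 1))) : ℝ) := fun s hs q =>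
    PA_bound F α (t - s) C hC (by linarith [hs.2]) q
  -- facts common to `f` and `g`
  have common : ∀ h : ℝ → ℝ × ℝ → ℂ, (∀ s ∈ Set.Icc (0 : ℝ) T, Integrable (h s)) →
      (∀ s ∈ Set.Icc (0 : ℝ) T,
        Tendsto (fun s' : ℝ => ∫ p : ℝ × ℝ, ‖h s' p - h s p‖)
          (nhdsWithin s (Set.Icc (0 : ℝ) T)) (nhds 0)) →
      ∃ D : ℝ, (∀ s ∈ Set.Ioo (0 : ℝ) t, ∀ x y, ‖cv (PA F α (t - s)) (h s) x y‖ ≤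
          D * (t - s) ^ (-((α + 2) / (2 * (α + 1))) : ℝ)) ∧
        ∀ x y, AEStronglyMeasurable (fun s => cv (PA F α (t - s)) (h s) x y)
          (volume.restrict (Set.Ioo 0 t)) := by
    intro h hInt hCont
    obtain ⟨K, hK⟩ := norm_bdd T h hInt hCont
    refine ⟨C * K, fun s hs x y => ?_, fun x y =>
      (J_cont F α T C hα hFc hC0 hC h hInt hCont t ht.2 x y).aestronglyMeasurable
        measurableSet_Ioo⟩
    refine (cv_bound _ _ _ (hPb s hs) (hInt s (hsub s hs)) x y).trans ?_
    have h1 : 0 ≤ C * (t - s) ^ (-((α + 2) / (2 * (α + 1))) : ℝ) :=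
      (norm_nonneg _).trans (hPb s hs 0)
    refine (mul_le_mul_of_nonneg_left (hK s (hsub s hs)) h1).trans (le_of_eq (by ring))
  obtain ⟨Df, hDf, hmf⟩ := common f hfInt hfCont
  obtain ⟨Dg, hDg, hmg⟩ := common g hgInt hgCont
  have hbi := fun D => bound_int ((α + 2) / (2 * (α + 1))) t D ht.1 hβ
  have hif : ∀ x y : ℝ, IntegrableOn (fun s : ℝ => cv (PA F α (t - s)) (f s) x y)
      (Set.Ioo (0 : ℝ) t) := fun x y => Integrable.mono' (hbi Df) (hmf x y)
    ((ae_restrict_mem measurableSet_Ioo).mono fun s hs => hDf s hs x y)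
  refine ⟨⟨C, fun s hs x y => ⟨?_, ?_⟩⟩, hif, fun y x => ?_, fun y => ?_, fun y => ?_⟩
  · exact cv_int (PA F α (t - s)) (f s) _ (PA_cont F α _ hFc) (hPb s hs) (hfInt s (hsub s hs)) x y
  · exact cv_bound (PA F α (t - s)) (f s) _ (hPb s hs) (hfInt s (hsub s hs)) x y
  · exact (hasDerivAt_integral_of_dominated_loc_of_deriv_le (𝕜 := ℝ)
      (μ := volume.restrict (Set.Ioo 0 t))
      (F := fun x s => cv (PA F α (t - s)) (f s) x y)
      (F' := fun x s => cv (PA F α (t - s)) (g s) x y)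
      (x₀ := x) (s := Set.univ) univ_mem
      (Eventually.of_forall fun x => hmf x y) (hif x y) (hmg x y)
      ((ae_restrict_mem measurableSet_Ioo).mono fun s hs x _ => hDg s hs x y) (hbi Dg)
      ((ae_restrict_mem measurableSet_Ioo).mono fun s hs x _ =>
        cv_deriv _ _ _ _ (PA_cont F α _ hFc) (hPb s hs) (hfInt s (hsub s hs))
          (hgInt s (hsub s hs)) (hdistrib s (hsub s hs)) x y)).2
  · exact continuous_of_dominated (μ := volume.restrict (Set.Ioo 0 t))
      (F := fun x s => cv (PA F α (t - s)) (g s) x y) (fun x => hmg x y)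
      (fun x => (ae_restrict_mem measurableSet_Ioo).mono fun s hs => hDg s hs x y) (hbi Dg)
      ((ae_restrict_mem measurableSet_Ioo).mono fun s hs =>
        cv_cont _ _ _ (PA_cont F α _ hFc) (hPb s hs) (hgInt s (hsub s hs)) y)
  · have hcg : (cocompact ℝ).IsCountablyGenerated := by
      rw [cocompact_eq_atBot_atTop]; infer_instance
    have key := tendsto_integral_filter_of_dominated_convergence
      (μ := volume.restrict (Set.Ioo 0 t)) (l := cocompact ℝ) (f := fun _ => (0 : ℂ))
      (F := fun x s => cv (PA F α (t - s)) (f s) x y)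
      (fun s => Df * (t - s) ^ (-((α + 2) / (2 * (α + 1))) : ℝ))
      (Eventually.of_forall fun x => hmf x y)
      (Eventually.of_forall fun x =>
        (ae_restrict_mem measurableSet_Ioo).mono fun s hs => hDf s hs x y) (hbi Df)
      ((ae_restrict_mem measurableSet_Ioo).mono fun s hs => by
        have hfs := hfInt s (hsub s hs)
        have := tendsto_integral_filter_of_dominated_convergence
          (μ := (volume : Measure (ℝ × ℝ))) (l := cocompact ℝ) (f := fun _ => (0 : ℂ))
          (F := fun x p => PA F α (t - s) (x - p.1, y - p.2) * f s p)
          (fun p => C * (t - s) ^ (-((α + 2) / (2 * (α + 1))) : ℝ) * ‖f s p‖)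
          (Eventually.of_forall fun x =>
            (cv_int _ _ _ (PA_cont F α _ hFc) (hPb s hs) hfs x y).aestronglyMeasurable)
          (Eventually.of_forall fun x => ae_of_all _ fun p => by
            rw [norm_mul]; gcongr; exact hPb s hs _)
          (hfs.norm.const_mul _)
          (ae_of_all _ fun p => by
            have h1 := (PA_zero F α (t - s) hF0 (by linarith [hs.2]) p.1 (y - p.2)).mul_const
              (f s p)
            rwa [zero_mul] at h1)
        rwa [integral_zero] at this)
    rwa [integral_zero] at key
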